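/- arXiv:math/0012063 — 4 statements merged into one kernel-verified Lean document; each statement's English description precedes it below -/
import Mathlib

section
/- If p, q ∈ R satisfy p ≠ 0 and 𝒟(p) = q·p, then there exist a ∈ ℕ and a nonzero ℓ ∈ F such that p = C(ℓ)·det[X]^a and q = C(d(ℓ)/ℓ) + a·Σ_{s,t} C(trace(M_{st}))·Y_{st}. (For the standard basis M_{st} = E(s,t) of elementary matrices, the last sum is Σ_{i=1}^n Y_{ii}, recovering the classification of Darboux polynomials for the standard generic derivation.) -/
open MvPolynomial

/-- The polynomial ring `R = F{Y_ij}[X_ij]`: multivariate polynomials over `F` in the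
variables `Y i j k` (indexed by `Sum.inl (i,j,k)`) and `X i j` (indexed by `Sum.inr (i,j)`). -/
abbrev Rgen (F : Type*) [Field F] (n : ℕ) : Type _ :=
  MvPolynomial ((Fin n × Fin n × ℕ) ⊕ (Fin n × Fin n)) F

/-- `det[X]`: the determinant of the `n × n` matrix whose `(i,j)` entry is the variable `X i j`. -/
noncomputable def detX (F : Type*) [Field F] (n : ℕ) : Rgen F n :=
  (Matrix.of fun i j : Fin n => X (Sum.inr (i, j))).det

/-- The `F`-subalgebra `F{Y}` of `R` generated by all the variables `Y i j k`. -/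
noncomputable def FY (F : Type*) [Field F] (n : ℕ) : Subalgebra F (Rgen F n) :=
  Algebra.adjoin F (Set.range fun v : Fin n × Fin n × ℕ => X (Sum.inl v))

/-- The `F`-subalgebra `F[X]` of `R` generated by all the variables `X i j`. -/
noncomputable def FX (F : Type*) [Field F] (n : ℕ) : Subalgebra F (Rgen F n) :=
  Algebra.adjoin F (Set.range fun v : Fin n × Fin n => X (Sum.inr v))

/-!
Let `p` divide `𝒟 p`. Since `[∂/∂Y_{t,k+1}, 𝒟] = ∂/∂Y_{t,k}`, if `p` does not involve `Y_{t,k+1}`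
then `p` divides `∂p/∂Y_{t,k}`, which forces `∂p/∂Y_{t,k} = 0`; descending from a large order, `p`
involves no `Y` at all. Since `[∂/∂Y_{t,0}, 𝒟]` is the vector field of left multiplication by `M_t`,
`p` divides its image under the left multiplication field of every matrix `B`, and by degree it is
an eigenvector. The eigenvalue is linear in `B` and kills commutators, hence is `c * tr B`, and
`c = a` is a natural number because `B = E_{ii}` acts by the Euler operator of the `i`-th row. The
matrices `B = E_{ij}` together say `X * (∇p)ᵀ = a p • 1`; multiplying by the adjugate of `X` gives
`det X • ∇p = a p • ∇(det X)`. So `p` and `(det X) ^ a` have vanishing Wronskians and are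
proportional, and the cofactor is read off from Jacobi's formula for `𝒟 (det X)`.
-/

section MvPolynomial

variable {σ R : Type*}

theorem totalDegree_pderiv_lt [CommSemiring R] {v : σ} {p : MvPolynomial σ R}
    (h : pderiv v p ≠ 0) : (pderiv v p).totalDegree < p.totalDegree := by
  obtain ⟨m, hm, hdeg⟩ := Finset.exists_mem_eq_sup _ (support_nonempty.2 h) Finsupp.degree
  have hmem : m + Finsupp.single v 1 ∈ p.support := by
    rw [mem_support_iff, coeff_pderiv] at hm
    exact mem_support_iff.2 (left_ne_zero_of_mul hm)
  have hle : (m + Finsupp.single v 1).degree ≤ p.totalDegree := le_totalDegree hmem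
  rw [map_add, Finsupp.degree_single] at hle
  exact hdeg.trans_lt (Nat.lt_of_succ_le hle)

theorem pderiv_eq_zero_of_dvd [CommRing R] [IsDomain R] {v : σ} {p : MvPolynomial σ R}
    (h : p ∣ pderiv v p) : pderiv v p = 0 := by
  by_contra h0
  exact (totalDegree_le_of_dvd_of_isDomain h h0).not_gt (totalDegree_pderiv_lt h0)

theorem notMem_vars_of_pderiv_eq_zero [CommSemiring R] [NoZeroDivisors R] [CharZero R] {v : σ}
    {p : MvPolynomial σ R} (h : pderiv v p = 0) : v ∉ p.vars := by
  intro hv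
  obtain ⟨m, hm, hvm⟩ := (mem_vars_iff_mem_support v).1 hv
  have hcoeff := coeff_pderiv (i := v) p (m - Finsupp.single v 1)
  rw [h, coeff_zero, Finsupp.sub_add_single_one_cancel (Finsupp.mem_support_iff.1 hvm)] at hcoeff
  exact mul_ne_zero (mem_support_iff.1 hm) (Nat.cast_add_one_ne_zero _) hcoeff.symm

theorem exists_eq_C_of_pderiv_eq_zero [CommSemiring R] [NoZeroDivisors R] [CharZero R]
    {p : MvPolynomial σ R} (h : ∀ v, pderiv v p = 0) : ∃ c, p = C c :=
  ⟨_, vars_eq_empty_iff_eq_C.1 <|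
    Finset.eq_empty_of_forall_notMem fun v => notMem_vars_of_pderiv_eq_zero (h v)⟩

theorem exists_eq_C_mul_of_pderiv_mul_eq {F : Type*} [Field F] [CharZero F]
    {f g : MvPolynomial σ F} (hg : g ≠ 0) (h : ∀ v, pderiv v f * g = f * pderiv v g) :
    ∃ c, f = C c * g := by
  -- For coprime `f'`, `g'` the hypothesis gives `f' ∣ ∂f'` and `g' ∣ ∂g'`.
  obtain ⟨f', g', e, hcop, rfl, rfl⟩ := UniqueFactorizationMonoid.exists_reduced_factors' f g hg
  have he : e ≠ 0 := left_ne_zero_of_mul hg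
  have hred (v : σ) : pderiv v f' * g' = f' * pderiv v g' := by
    refine mul_left_cancel₀ (mul_ne_zero he he) ?_
    linear_combination (h v) - (e * g') * (pderiv_mul (i := v) (f := e) (g := f'))
      + (e * f') * (pderiv_mul (i := v) (f := e) (g := g'))
  have hf' (v : σ) : pderiv v f' = 0 :=
    pderiv_eq_zero_of_dvd <| hcop.dvd_of_dvd_mul_right ⟨_, hred v⟩
  have hg' (v : σ) : pderiv v g' = 0 :=
    pderiv_eq_zero_of_dvd <| hcop.symm.dvd_of_dvd_mul_left ⟨_, by rw [← hred v, mul_comm]⟩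
  obtain ⟨a, rfl⟩ := exists_eq_C_of_pderiv_eq_zero hf'
  obtain ⟨b, rfl⟩ := exists_eq_C_of_pderiv_eq_zero hg'
  have hb : b ≠ 0 := by
    rintro rfl
    simp at hg
  exact ⟨a / b, by rw [mul_left_comm, ← C_mul, div_mul_cancel₀ a hb]⟩

theorem coeff_X_mul_pderiv [CommSemiring R] (v : σ) (m : σ →₀ ℕ) (p : MvPolynomial σ R) :
    coeff m (X v * pderiv v p) = m v * coeff m p := by
  classical
  induction p using MvPolynomial.induction_on' with
  | monomial u r =>
    rw [X_mul_pderiv_monomial, coeff_smul, nsmul_eq_mul, coeff_monomial]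
    split_ifs with hu <;> simp [hu]
  | add p q hp hq => simp only [map_add, mul_add, coeff_add, hp, hq]

theorem exists_eq_natCast_of_sum_X_mul_pderiv_eq_C_mul [CommRing R] [IsDomain R] {ι : Type*}
    {s : Finset ι} {v : ι → σ} {c : R} {p : MvPolynomial σ R} (hp : p ≠ 0)
    (h : ∑ k ∈ s, X (v k) * pderiv (v k) p = C c * p) : ∃ a : ℕ, c = a := by
  obtain ⟨m, hm⟩ := ne_zero_iff.1 hp
  refine ⟨∑ k ∈ s, m (v k), mul_right_cancel₀ hm ?_⟩
  rw [← coeff_C_mul, ← h, coeff_sum, Nat.cast_sum, Finset.sum_mul]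
  exact Finset.sum_congr rfl fun k _ => coeff_X_mul_pderiv (v k) m p

theorem derivation_sum_apply {A M ι : Type*} [CommSemiring R] [CommSemiring A] [AddCommMonoid M]
    [Algebra R A] [Module A M] [Module R M] (s : Finset ι) (δ : ι → Derivation R A M) (a : A) :
    (∑ k ∈ s, δ k) a = ∑ k ∈ s, δ k a := by
  simp only [← Derivation.coeFnAddMonoidHom_apply, map_sum, Finset.sum_apply]

theorem derivation_apply_eq_sum_vars [CommSemiring R]
    (δ : Derivation R (MvPolynomial σ R) (MvPolynomial σ R)) (p : MvPolynomial σ R) :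
    δ p = ∑ v ∈ p.vars, δ (X v) * pderiv v p := by
  classical
  have hδ : δ p = (∑ v ∈ p.vars, δ (X v) • pderiv v) p := by
    refine derivation_eq_of_forall_mem_vars fun w hw => ?_
    simp [derivation_sum_apply, pderiv_X, Pi.single_apply, hw]
  simpa only [derivation_sum_apply, Derivation.smul_apply, smul_eq_mul] using hδ

theorem totalDegree_derivation_apply_le [CommSemiring R]
    {δ : Derivation R (MvPolynomial σ R) (MvPolynomial σ R)}
    (hδ : ∀ v, (δ (X v)).totalDegree ≤ 1) (p : MvPolynomial σ R) :
    (δ p).totalDegree ≤ p.totalDegree := by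
  rw [derivation_apply_eq_sum_vars]
  refine totalDegree_finsetSum_le fun v _ => ?_
  rcases eq_or_ne (pderiv v p) 0 with h0 | h0
  · simp [h0]
  · calc (δ (X v) * pderiv v p).totalDegree
        ≤ (δ (X v)).totalDegree + (pderiv v p).totalDegree := totalDegree_mul _ _
      _ ≤ 1 + (pderiv v p).totalDegree := by gcongr; exact hδ v
      _ ≤ p.totalDegree := by have := totalDegree_pderiv_lt h0; omega

theorem exists_linearMap_eq_smul_of_dvd [CommRing R] [IsDomain R] {V : Type*} [AddCommMonoid V]
    [Module R V] {L : V →ₗ[R] MvPolynomial σ R} {p : MvPolynomial σ R} (hp : p ≠ 0)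
    (hdvd : ∀ x, p ∣ L x) (hdeg : ∀ x, (L x).totalDegree ≤ p.totalDegree) :
    ∃ f : V →ₗ[R] R, ∀ x, L x = f x • p := by
  have hspan (x : V) : L x ∈ Submodule.span R {p} := by
    obtain ⟨q, hq⟩ := hdvd x
    rcases eq_or_ne q 0 with rfl | hq0
    · simp [hq]
    have hdeg_q : q.totalDegree = 0 := by
      have := hdeg x
      rw [hq, totalDegree_mul_of_isDomain hp hq0] at this
      omega
    rw [hq, totalDegree_eq_zero_iff_eq_C.1 hdeg_q, mul_comm, ← smul_eq_C_mul]
    exact Submodule.smul_mem _ _ (Submodule.mem_span_singleton_self p)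
  let e := LinearEquiv.toSpanNonzeroSingleton R (MvPolynomial σ R) p hp
  refine ⟨e.symm ∘ₗ L.codRestrict _ hspan, fun x => ?_⟩
  exact congrArg Subtype.val (e.apply_symm_apply ⟨L x, hspan x⟩).symm

theorem pderiv_apply_of_forall_X [CommRing R] {v : σ}
    {D : Derivation ℤ (MvPolynomial σ R) (MvPolynomial σ R)}
    {δ : Derivation R (MvPolynomial σ R) (MvPolynomial σ R)}
    (hC : ∀ r, pderiv v (D (C r)) = 0) (hX : ∀ w, pderiv v (D (X w)) = δ (X w))
    (p : MvPolynomial σ R) : pderiv v (D p) = D (pderiv v p) + δ p := by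
  classical
  induction p using MvPolynomial.induction_on with
  | C r => simp [hC]
  | add p q hp hq => simp only [map_add, hp, hq]; ring
  | mul_X p w hp =>
    have hD : D (pderiv v (X w)) = 0 := by
      rw [pderiv_X, Pi.single_apply]; split_ifs <;> simp
    simp only [Derivation.leibniz, smul_eq_mul, map_add, hp, hX, hD]
    ring

end MvPolynomial

section Matrix

open Matrix

theorem derivation_prod {R A ι : Type*} [CommSemiring R] [CommSemiring A] [Algebra R A]
    [DecidableEq ι] (D : Derivation R A A) (s : Finset ι) (f : ι → A) :
    D (∏ i ∈ s, f i) = ∑ i ∈ s, D (f i) * ∏ j ∈ s.erase i, f j := by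
  induction s using Finset.induction_on with
  | empty => simp
  | insert i s hi ih =>
    rw [Finset.prod_insert hi, Finset.sum_insert hi, D.leibniz, ih, Finset.erase_insert hi]
    simp only [smul_eq_mul, Finset.mul_sum]
    rw [add_comm, mul_comm]
    congr 1
    refine Finset.sum_congr rfl fun j hj => ?_
    have hij : i ≠ j := by rintro rfl; exact hi hj
    rw [Finset.erase_insert_of_ne hij, Finset.prod_insert (by simp [hi]), mul_left_comm]

theorem derivation_det {R A m : Type*} [CommRing R] [CommRing A] [Algebra R A]
    [Fintype m] [DecidableEq m] (D : Derivation R A A) (N : Matrix m m A) :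
    D N.det = (N.adjugate * N.map D).trace := by
  have hcol (i : m) : (N.adjugate * N.map D) i i = (N.updateCol i fun k => D (N k i)).det := by
    rw [← cramer_apply, cramer_eq_adjugate_mulVec]
    rfl
  simp only [trace, diag_apply, hcol, det_apply', map_sum]
  rw [Finset.sum_comm]
  refine Finset.sum_congr rfl fun g _ => ?_
  rw [D.leibniz, D.map_intCast, derivation_prod, smul_zero, add_zero, smul_eq_mul, Finset.mul_sum]
  refine Finset.sum_congr rfl fun i _ => ?_
  rw [← Finset.mul_prod_erase _ _ (Finset.mem_univ i), updateCol_self]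
  congr 2
  refine Finset.prod_congr rfl fun j hj => ?_
  rw [updateCol_ne (Finset.ne_of_mem_erase hj)]

theorem derivation_det_of_map_eq_mul {R A m : Type*} [CommRing R] [CommRing A] [Algebra R A]
    [Fintype m] [DecidableEq m] {D : Derivation R A A} {N B : Matrix m m A}
    (h : N.map D = B * N) : D N.det = B.trace * N.det := by
  rw [derivation_det, h, trace_mul_comm, Matrix.mul_assoc, mul_adjugate, Matrix.mul_smul,
    Matrix.mul_one, trace_smul, smul_eq_mul, mul_comm]

theorem exists_eq_trace_smul_of_apply_mul_comm {R M m : Type*} [CommSemiring R]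
    [AddCommMonoid M] [Module R M] [Fintype m] {f : Matrix m m R →ₗ[R] M}
    (hf : ∀ A B, f (A * B) = f (B * A)) :
    ∃ c : M, ∀ A, f A = A.trace • c := by
  classical
  have hoff {i j : m} (hij : i ≠ j) : f (single i j 1) = 0 := by
    simpa [hij.symm] using hf (single i i 1) (single i j 1)
  have hdiag (i j : m) : f (single i i 1) = f (single j j 1) := by
    simpa using hf (single i j 1) (single j i 1)
  rcases isEmpty_or_nonempty m with hm | ⟨⟨i₀⟩⟩
  · exact ⟨0, fun A => by simp [Subsingleton.elim A 0]⟩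
  refine ⟨f (single i₀ i₀ 1), fun A => ?_⟩
  have key : f = (traceLinearMap m R R).smulRight (f (single i₀ i₀ 1)) := by
    refine ext_linearMap _ fun i j => LinearMap.ext_ring ?_
    rcases eq_or_ne i j with rfl | hij
    · simp [hdiag i i₀]
    · simp [hij, hoff hij]
  exact DFunLike.congr_fun key A

end Matrix

section GenericMatrix

open Matrix

variable (τ m R : Type*) [CommRing R]

/-- The generic matrix `(X i j)`, over a polynomial ring with further variables indexed by `τ`. -/
noncomputable def genericMatrix : Matrix m m (MvPolynomial (τ ⊕ (m × m)) R) :=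
  Matrix.of fun i j => X (Sum.inr (i, j))

variable {τ m R}

theorem det_genericMatrix_ne_zero [Fintype m] [DecidableEq m] [Nontrivial R] :
    (genericMatrix τ m R).det ≠ 0 := by
  have hrename : genericMatrix τ m R =
      (rename Sum.inr).toRingHom.mapMatrix (mvPolynomialX m m R) := by
    ext1 i j
    simp [genericMatrix]
  rw [hrename, ← RingHom.map_det]
  exact (map_ne_zero_iff _ (rename_injective _ Sum.inr_injective)).2 (det_mvPolynomialX_ne_zero m R)

theorem pderiv_inl_det_genericMatrix [Fintype m] [DecidableEq m] (y : τ) :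
    pderiv (Sum.inl y) (genericMatrix τ m R).det = 0 := by
  have hmap : (genericMatrix τ m R).map (pderiv (Sum.inl y)) = 0 := by
    ext1 i j
    simp [genericMatrix]
  rw [derivation_det, hmap, mul_zero, trace_zero]

theorem pderiv_inr_det_genericMatrix [Fintype m] [DecidableEq m] (i j : m) :
    pderiv (Sum.inr (i, j)) (genericMatrix τ m R).det = (genericMatrix τ m R).adjugate j i := by
  classical
  have hmap : (genericMatrix τ m R).map (pderiv (Sum.inr (i, j))) = single i j 1 := by
    ext1 k l
    simp [genericMatrix, pderiv_X, Pi.single_apply, single_apply, eq_comm]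
  simp only [derivation_det, hmap, trace_mul_single, MulOpposite.op_one, one_smul]

variable [Fintype m]

/-- For a matrix `B`, the derivation that kills the variables indexed by `τ` and sends the generic
matrix `X` to `B * X`: the vector field of the left multiplication action of `Lie(GLₘ)`. -/
noncomputable def leftMulDerivation : Matrix m m R →ₗ[R]
    Derivation R (MvPolynomial (τ ⊕ (m × m)) R) (MvPolynomial (τ ⊕ (m × m)) R) :=
  (mkDerivationEquiv R).toLinearMap ∘ₗ
    { toFun B := Sum.elim 0 fun ij => ∑ l, C (B ij.1 l) * X (Sum.inr (l, ij.2))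
      map_add' A B := by
        ext1 (y | ij) <;> simp [add_mul, Finset.sum_add_distrib]
      map_smul' c B := by
        ext1 (y | ij) <;> simp [Finset.mul_sum, smul_eq_C_mul, mul_assoc] }

@[simp]
theorem leftMulDerivation_X_inl (B : Matrix m m R) (y : τ) :
    leftMulDerivation B (X (Sum.inl y) : MvPolynomial (τ ⊕ (m × m)) R) = 0 :=
  mkDerivation_X _ _ _

@[simp]
theorem leftMulDerivation_X_inr (B : Matrix m m R) (i j : m) :
    leftMulDerivation B (X (Sum.inr (i, j)) : MvPolynomial (τ ⊕ (m × m)) R) =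
      ∑ l, C (B i l) * X (Sum.inr (l, j)) :=
  mkDerivation_X _ _ _

theorem lie_leftMulDerivation (A B : Matrix m m R) :
    ⁅leftMulDerivation (τ := τ) A, leftMulDerivation (τ := τ) B⁆ =
      leftMulDerivation (B * A - A * B) := by
  have hmul (A B : Matrix m m R) (i j : m) :
      leftMulDerivation (τ := τ) A (leftMulDerivation B (X (Sum.inr (i, j)))) =
        leftMulDerivation (B * A) (X (Sum.inr (i, j))) := by
    simp only [leftMulDerivation_X_inr, map_sum, Derivation.leibniz, derivation_C, mul_zero,
      add_zero, smul_eq_mul, mul_apply, Finset.mul_sum, Finset.sum_mul, C_mul, mul_assoc]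
    exact Finset.sum_comm
  refine derivation_ext ?_
  rintro (y | ⟨i, j⟩)
  · simp [Derivation.commutator_apply]
  · rw [map_sub, Derivation.sub_apply, Derivation.commutator_apply, hmul, hmul]

theorem totalDegree_leftMulDerivation_apply_le (B : Matrix m m R)
    (p : MvPolynomial (τ ⊕ (m × m)) R) :
    (leftMulDerivation B p).totalDegree ≤ p.totalDegree := by
  refine totalDegree_derivation_apply_le ?_ p
  rintro (y | ⟨i, j⟩)
  · simp
  · rw [leftMulDerivation_X_inr]
    refine totalDegree_finsetSum_le fun l _ => (totalDegree_mul _ _).trans ?_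
    rw [totalDegree_C, zero_add]
    exact (totalDegree_monomial_le _ _).trans (by simp)

theorem leftMulDerivation_single_apply [DecidableEq m] (i j : m)
    (p : MvPolynomial (τ ⊕ (m × m)) R) :
    leftMulDerivation (single i j 1) p =
      ∑ k, X (Sum.inr (j, k)) * pderiv (Sum.inr (i, k)) p := by
  classical
  have hder : leftMulDerivation (τ := τ) (single i j (1 : R)) =
      ∑ k, (X (Sum.inr (j, k)) : MvPolynomial (τ ⊕ (m × m)) R) • pderiv (Sum.inr (i, k)) := by
    refine derivation_ext ?_
    rintro (y | ⟨k, l⟩)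
    · simp [derivation_sum_apply, pderiv_X]
    · rcases eq_or_ne i k with rfl | hik
      · simp [derivation_sum_apply, pderiv_X, single_apply, Pi.single_apply]
      · simp [derivation_sum_apply, pderiv_X, hik, hik.symm]
  rw [hder, derivation_sum_apply]
  simp only [Derivation.smul_apply, smul_eq_mul]

theorem exists_leftMulDerivation_eq_trace_smul [IsDomain R] {p : MvPolynomial (τ ⊕ (m × m)) R}
    (hp : p ≠ 0) (h : ∀ B : Matrix m m R, p ∣ leftMulDerivation B p) :
    ∃ c : R, ∀ B : Matrix m m R, leftMulDerivation B p = (B.trace * c) • p := by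
  let L : Matrix m m R →ₗ[R] MvPolynomial (τ ⊕ (m × m)) R :=
    { toFun B := leftMulDerivation B p
      map_add' A B := by rw [map_add, Derivation.add_apply]
      map_smul' r B := by rw [map_smul, Derivation.smul_apply, RingHom.id_apply] }
  obtain ⟨f, hf⟩ : ∃ f : Matrix m m R →ₗ[R] R, ∀ B, leftMulDerivation B p = f B • p :=
    exists_linearMap_eq_smul_of_dvd (L := L) hp h
      fun B => totalDegree_leftMulDerivation_apply_le B p
  have hcomm (A B : Matrix m m R) : f (A * B) = f (B * A) := by
    have hbracket : f (A * B - B * A) • p = 0 := by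
      rw [← hf, ← lie_leftMulDerivation, Derivation.commutator_apply, hf A, hf B,
        Derivation.map_smul, Derivation.map_smul, hf A, hf B, smul_comm, sub_self]
    rwa [smul_eq_zero_iff_left hp, map_sub, sub_eq_zero] at hbracket
  obtain ⟨c, hc⟩ := exists_eq_trace_smul_of_apply_mul_comm hcomm
  exact ⟨c, fun B => by rw [hf, hc, smul_eq_mul]⟩

theorem exists_leftMulDerivation_eq_natCast_mul_trace_smul [IsDomain R]
    {p : MvPolynomial (τ ⊕ (m × m)) R} (hp : p ≠ 0)
    (h : ∀ B : Matrix m m R, p ∣ leftMulDerivation B p) :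
    ∃ a : ℕ, ∀ B : Matrix m m R, leftMulDerivation B p = (a * B.trace) • p := by
  classical
  obtain ⟨c, hc⟩ := exists_leftMulDerivation_eq_trace_smul hp h
  rcases isEmpty_or_nonempty m with hm | ⟨⟨i⟩⟩
  · exact ⟨0, fun B => by simp [hc]⟩
  obtain ⟨a, rfl⟩ : ∃ a : ℕ, c = a := by
    refine exists_eq_natCast_of_sum_X_mul_pderiv_eq_C_mul (s := Finset.univ)
      (v := fun k => Sum.inr (i, k)) hp ?_
    rw [← leftMulDerivation_single_apply, hc, trace_single_eq_same, one_mul, smul_eq_C_mul]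
  exact ⟨a, fun B => by rw [hc, mul_comm]⟩

theorem det_mul_pderiv_inr_of_leftMulDerivation_eq [DecidableEq m]
    {p : MvPolynomial (τ ⊕ (m × m)) R} {c : R}
    (h : ∀ B : Matrix m m R, leftMulDerivation B p = (c * B.trace) • p) (i j : m) :
    (genericMatrix τ m R).det * pderiv (Sum.inr (i, j)) p =
      C c * p * (genericMatrix τ m R).adjugate j i := by
  set N := genericMatrix τ m R
  let grad : Matrix m m (MvPolynomial (τ ⊕ (m × m)) R) := of fun i j => pderiv (Sum.inr (i, j)) p
  have hgrad : N * gradᵀ = (C c * p) • 1 := by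
    ext1 k l
    have hkl := h (single l k 1)
    rw [leftMulDerivation_single_apply] at hkl
    refine (mul_apply (M := N)).trans (hkl.trans ?_)
    rcases eq_or_ne k l with rfl | hne
    · simp [smul_eq_C_mul]
    · simp [hne, hne.symm]
  have hcramer : N.det • gradᵀ = (C c * p) • N.adjugate := by
    rw [← Matrix.one_mul gradᵀ, ← Matrix.smul_mul, ← adjugate_mul, Matrix.mul_assoc, hgrad,
      Matrix.mul_smul, Matrix.mul_one]
  exact congrFun (congrFun hcramer j) i

theorem exists_eq_C_mul_det_pow {F : Type*} [Field F] [CharZero F] [DecidableEq m]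
    {p : MvPolynomial (τ ⊕ (m × m)) F} {a : ℕ} (hτ : ∀ y : τ, pderiv (Sum.inl y) p = 0)
    (h : ∀ B : Matrix m m F, leftMulDerivation B p = (a * B.trace) • p) :
    ∃ c, p = C c * (genericMatrix τ m F).det ^ a := by
  refine exists_eq_C_mul_of_pderiv_mul_eq (pow_ne_zero a det_genericMatrix_ne_zero) ?_
  rintro (y | ⟨i, j⟩)
  · simp [hτ, pderiv_inl_det_genericMatrix]
  refine mul_left_cancel₀ det_genericMatrix_ne_zero ?_
  rw [← mul_assoc, det_mul_pderiv_inr_of_leftMulDerivation_eq h, pderiv_pow,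
    pderiv_inr_det_genericMatrix, map_natCast]
  cases a with
  | zero => simp
  | succ a =>
    rw [Nat.add_sub_cancel]
    ring

end GenericMatrix

section GenericDerivation

open Matrix

theorem dvd_derivation_apply_of_dvd {R A : Type*} [CommSemiring R] [CommSemiring A] [Algebra R A]
    {δ : Derivation R A A} {a b : A} (h : a ∣ b) (ha : δ a = 0) : a ∣ δ b := by
  obtain ⟨c, rfl⟩ := h
  exact ⟨δ c, by rw [δ.leibniz, ha, smul_zero, add_zero, smul_eq_mul]⟩

variable {ι τ m R : Type*} [CommRing R] [Fintype ι] [Fintype m]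

/-- `D` is the generic derivation `∑ t, Y t 0 • 𝒟_{M t}` attached to a family `M` of matrices: it
extends `d`, shifts the differential variables `Y t k ↦ Y t (k + 1)`, and sends the generic matrix
`X` to `(∑ t, Y t 0 • M t) * X`. The bijection `e` encodes the pair `(t, k)` of `Y t k` in the index
type `τ` of the polynomial ring. -/
structure IsGenericDerivation (d : R → R) (M : ι → Matrix m m R) (e : ι × ℕ ≃ τ)
    (D : Derivation ℤ (MvPolynomial (τ ⊕ (m × m)) R) (MvPolynomial (τ ⊕ (m × m)) R)) : Prop where
  map_C (r : R) : D (C r) = C (d r)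
  map_X_inl (t : ι) (k : ℕ) : D (X (Sum.inl (e (t, k)))) = X (Sum.inl (e (t, k + 1)))
  map_X_inr (i j : m) : D (X (Sum.inr (i, j))) =
    ∑ t, X (Sum.inl (e (t, 0))) * ∑ l, C (M t i l) * X (Sum.inr (l, j))

namespace IsGenericDerivation

variable {d : R → R} {M : ι → Matrix m m R} {e : ι × ℕ ≃ τ}
  {D : Derivation ℤ (MvPolynomial (τ ⊕ (m × m)) R) (MvPolynomial (τ ⊕ (m × m)) R)}
  {p : MvPolynomial (τ ⊕ (m × m)) R}

theorem pderiv_succ_apply (hD : IsGenericDerivation d M e D) (t : ι) (k : ℕ)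
    (p : MvPolynomial (τ ⊕ (m × m)) R) :
    pderiv (Sum.inl (e (t, k + 1))) (D p) =
      D (pderiv (Sum.inl (e (t, k + 1))) p) + pderiv (Sum.inl (e (t, k))) p := by
  classical
  refine pderiv_apply_of_forall_X (fun r => by rw [hD.map_C, pderiv_C]) ?_ p
  rintro (y | ⟨i, j⟩)
  · obtain ⟨⟨t', k'⟩, rfl⟩ := e.surjective y
    simp [hD.map_X_inl, pderiv_X, Pi.single_apply]
  · simp [hD.map_X_inr]

theorem pderiv_zero_apply (hD : IsGenericDerivation d M e D) (t : ι)
    (p : MvPolynomial (τ ⊕ (m × m)) R) :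
    pderiv (Sum.inl (e (t, 0))) (D p) =
      D (pderiv (Sum.inl (e (t, 0))) p) + leftMulDerivation (M t) p := by
  classical
  refine pderiv_apply_of_forall_X (fun r => by rw [hD.map_C, pderiv_C]) ?_ p
  rintro (y | ⟨i, j⟩)
  · obtain ⟨⟨t', k'⟩, rfl⟩ := e.surjective y
    simp [hD.map_X_inl]
  · simp [hD.map_X_inr, pderiv_X, Pi.single_apply]

theorem pderiv_inl_eq_zero_of_dvd [IsDomain R] (hD : IsGenericDerivation d M e D)
    (hp : p ∣ D p) (y : τ) : pderiv (Sum.inl y) p = 0 := by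
  obtain ⟨⟨t, k⟩, rfl⟩ := e.surjective y
  have hdescend (j : ℕ) (hj : pderiv (Sum.inl (e (t, j + 1))) p = 0) :
      pderiv (Sum.inl (e (t, j))) p = 0 := by
    have hdvd := dvd_derivation_apply_of_dvd hp hj
    rw [hD.pderiv_succ_apply, hj, map_zero, zero_add] at hdvd
    exact pderiv_eq_zero_of_dvd hdvd
  obtain ⟨N, hkN, hN⟩ : ∃ N ≥ k, Sum.inl (e (t, N)) ∉ p.vars := by
    have hinj : Function.Injective fun j => (Sum.inl (e (t, j)) : τ ⊕ (m × m)) :=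
      fun i j hij => by simpa using hij
    have h_notMem := hinj.tendsto_cofinite.eventually p.vars.eventually_cofinite_notMem
    rw [Nat.cofinite_eq_atTop] at h_notMem
    obtain ⟨N, hN⟩ := (h_notMem.and (Filter.eventually_ge_atTop k)).exists
    exact ⟨N, hN.2, hN.1⟩
  exact Nat.decreasingInduction (motive := fun j _ => pderiv (Sum.inl (e (t, j))) p = 0)
    (fun j _ => hdescend j) (pderiv_eq_zero_of_notMem_vars hN) hkN

theorem dvd_leftMulDerivation_apply [IsDomain R] (hD : IsGenericDerivation d M e D)
    (hM : Submodule.span R (Set.range M) = ⊤) (hp : p ∣ D p) (B : Matrix m m R) :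
    p ∣ leftMulDerivation B p := by
  have hB : B ∈ Submodule.span R (Set.range M) := hM ▸ Submodule.mem_top
  induction hB using Submodule.span_induction with
  | mem B hB =>
    obtain ⟨t, rfl⟩ := hB
    have h0 := hD.pderiv_inl_eq_zero_of_dvd hp (e (t, 0))
    have hdvd := dvd_derivation_apply_of_dvd hp h0
    rwa [hD.pderiv_zero_apply, h0, map_zero, zero_add] at hdvd
  | zero => simp
  | add A B _ _ hA hB => rw [map_add, Derivation.add_apply]; exact dvd_add hA hB
  | smul r B _ hB => rw [map_smul, Derivation.smul_apply]; exact dvd_smul_of_dvd r hB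

theorem apply_det_genericMatrix [DecidableEq m] (hD : IsGenericDerivation d M e D) :
    D (genericMatrix τ m R).det =
      (∑ t, C (M t).trace * X (Sum.inl (e (t, 0)))) * (genericMatrix τ m R).det := by
  have hmap : (genericMatrix τ m R).map D =
      (∑ t, (X (Sum.inl (e (t, 0))) : MvPolynomial (τ ⊕ (m × m)) R) • (M t).map C) *
        genericMatrix τ m R := by
    ext1 i j
    simp only [genericMatrix, map_apply, of_apply, hD.map_X_inr, mul_apply, Matrix.sum_apply,
      Matrix.smul_apply, smul_eq_mul, Finset.mul_sum, Finset.sum_mul, mul_assoc]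
    exact Finset.sum_comm
  rw [derivation_det_of_map_eq_mul hmap, trace_sum]
  simp only [trace_smul, ← AddMonoidHom.map_trace, smul_eq_mul, mul_comm]

theorem apply_C_mul_det_pow {F : Type*} [Field F] [DecidableEq m] {d : F → F}
    {M : ι → Matrix m m F}
    {D : Derivation ℤ (MvPolynomial (τ ⊕ (m × m)) F) (MvPolynomial (τ ⊕ (m × m)) F)}
    (hD : IsGenericDerivation d M e D) {l : F} (hl : l ≠ 0) (a : ℕ) :
    D (C l * (genericMatrix τ m F).det ^ a) =
      (C (d l / l) + a • ∑ t, C (M t).trace * X (Sum.inl (e (t, 0)))) *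
        (C l * (genericMatrix τ m F).det ^ a) := by
  have hlog : C (d l) = C (d l / l) * (C l : MvPolynomial (τ ⊕ (m × m)) F) := by
    rw [← C_mul, div_mul_cancel₀ _ hl]
  rw [D.leibniz, D.leibniz_pow, hD.map_C, hD.apply_det_genericMatrix, hlog]
  cases a with
  | zero => simp
  | succ a =>
    simp only [smul_eq_mul, nsmul_eq_mul, Nat.add_sub_cancel]
    ring

end IsGenericDerivation

theorem span_range_eq_top_of_isUnit_det [DecidableEq m] {M : m × m → Matrix m m R}
    (h : IsUnit (of fun t ij : m × m => M t ij.1 ij.2).det) :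
    Submodule.span R (Set.range M) = ⊤ := by
  refine Submodule.eq_top_iff'.2 fun B => ?_
  obtain ⟨v, hv⟩ := vecMul_surjective_iff_isUnit.2 ((isUnit_iff_isUnit_det _).2 h)
    fun ij => B ij.1 ij.2
  have hB : B = ∑ t, v t • M t := by
    ext i j
    simpa [vecMul, dotProduct, Matrix.sum_apply] using (congrFun hv (i, j)).symm
  rw [hB]
  exact Submodule.sum_mem _ fun t _ => Submodule.smul_mem _ _ (Submodule.subset_span ⟨t, rfl⟩)

theorem stmt_14_general {F : Type*} [Field F] [CharZero F] [DecidableEq m] {d : F → F}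
    {M : ι → Matrix m m F} {e : ι × ℕ ≃ τ}
    {D : Derivation ℤ (MvPolynomial (τ ⊕ (m × m)) F) (MvPolynomial (τ ⊕ (m × m)) F)}
    (hD : IsGenericDerivation d M e D) (hM : Submodule.span F (Set.range M) = ⊤)
    {p q : MvPolynomial (τ ⊕ (m × m)) F} (hp : p ≠ 0) (hDp : D p = q * p) :
    ∃ (a : ℕ) (l : F), l ≠ 0 ∧ p = C l * (genericMatrix τ m F).det ^ a ∧
      q = C (d l / l) + a • ∑ t, C (M t).trace * X (Sum.inl (e (t, 0))) := by
  have hdvd : p ∣ D p := ⟨q, by rw [hDp, mul_comm]⟩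
  obtain ⟨a, ha⟩ := exists_leftMulDerivation_eq_natCast_mul_trace_smul hp
    (hD.dvd_leftMulDerivation_apply hM hdvd)
  obtain ⟨l, rfl⟩ := exists_eq_C_mul_det_pow (hD.pderiv_inl_eq_zero_of_dvd hdvd) ha
  have hl : l ≠ 0 := by
    rintro rfl
    simp at hp
  exact ⟨a, l, hl, rfl, mul_right_cancel₀ hp (hDp.symm.trans (hD.apply_C_mul_det_pow hl a))⟩

end GenericDerivation

/-- Basis-independence of the classification of Darboux polynomials:
for the generic derivation `𝒟 = ∑_{s,t} Y s t • 𝒟_{M st}` attached to any family of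
constant matrices `M st` forming a basis of `Lie(GLₙ)`, the Darboux polynomials in `R`
are exactly `C ℓ * det[X]^a`, with cofactor `C (d ℓ / ℓ) + a • ∑_{s,t} C (tr (M st)) * Y s t`. -/
theorem stmt_14
    {F : Type*} [Field F] [CharZero F] (d : F → F)
    (hd_add : ∀ a b : F, d (a + b) = d a + d b)
    (hd_mul : ∀ a b : F, d (a * b) = d a * b + a * d b)
    (n : ℕ) (hn : 1 ≤ n)
    (M : Fin n × Fin n → Matrix (Fin n) (Fin n) F)
    (hM_const : ∀ (st : Fin n × Fin n) (i l : Fin n), d (M st i l) = 0)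
    (hM_basis : IsUnit
      (Matrix.of fun st il : Fin n × Fin n => M st il.1 il.2).det)
    (D : Rgen F n → Rgen F n)
    (hD_add : ∀ a b, D (a + b) = D a + D b)
    (hD_mul : ∀ a b, D (a * b) = D a * b + a * D b)
    (hD_C : ∀ f : F, D (C f) = C (d f))
    (hD_Y : ∀ (s t : Fin n) (k : ℕ),
      D (X (Sum.inl (s, t, k))) = X (Sum.inl (s, t, k + 1)))
    (hD_X : ∀ i j : Fin n,
      D (X (Sum.inr (i, j))) =
        ∑ s : Fin n, ∑ t : Fin n, X (Sum.inl (s, t, 0)) *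
          (∑ l : Fin n, C (M (s, t) i l) * X (Sum.inr (l, j))))
    (p q : Rgen F n) (hp : p ≠ 0) (hDp : D p = q * p) :
    ∃ (a : ℕ) (l : F), l ≠ 0 ∧ p = C l * detX F n ^ a ∧
      q = C (d l / l) +
        a • ∑ s : Fin n, ∑ t : Fin n,
          C ((M (s, t)).trace) * X (Sum.inl (s, t, (0 : ℕ))) := by
  let D' : Derivation ℤ (Rgen F n) (Rgen F n) :=
    Derivation.mk' (AddMonoidHom.mk' D hD_add).toIntLinearMap fun a b => by
      simp [hD_mul, add_comm, mul_comm]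
  have hgen : IsGenericDerivation d M (Equiv.prodAssoc (Fin n) (Fin n) ℕ) D' :=
    { map_C := hD_C
      map_X_inl := fun st => hD_Y st.1 st.2
      map_X_inr := fun i j => by
        rw [Fintype.sum_prod_type]
        exact hD_X i j }
  obtain ⟨a, l, hl, hpl, hql⟩ :=
    stmt_14_general hgen (span_range_eq_top_of_isUnit_det hM_basis) hp hDp
  rw [Fintype.sum_prod_type] at hql
  exact ⟨a, l, hl, hpl, hql⟩
end

section
/- The following are equivalent: (i) the field of constants of K reduces to C, i.e. every u ∈ K with D(u) = 0 lies in the image of C under the composite embedding C ⊆ F → K; (ii) the family of m + n² elements of K consisting of the images of t_1, …, t_m together with the indeterminates X_{ij} (1 ≤ i,j ≤ n) is algebraically independent over the subfield of constants 𝒞. -/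
open MvPolynomial

/-- The field of rational functions `K = F(X_ij)` in `n²` indeterminates over `F`. -/
abbrev Kgen (F : Type*) [Field F] (n : ℕ) : Type _ :=
  FractionRing (MvPolynomial (Fin n × Fin n) F)

/-- The subfield of constants of a field `K` equipped with a derivation `D`. -/
def constSubfield {K : Type*} [Field K] (D : K → K)
    (hD_add : ∀ a b : K, D (a + b) = D a + D b)
    (hD_mul : ∀ a b : K, D (a * b) = D a * b + a * D b) : Subfield K where
  carrier := {c | D c = 0}
  zero_mem' := by
    have h := hD_add 0 0
    rw [add_zero] at h
    nth_rewrite 1 [← add_zero (D 0)] at h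
    exact (add_left_cancel h).symm
  one_mem' := by
    have h := hD_mul 1 1
    rw [mul_one, one_mul, mul_one] at h
    nth_rewrite 1 [← add_zero (D 1)] at h
    exact (add_left_cancel h).symm
  add_mem' := by
    intro a b ha hb
    simp only [Set.mem_setOf_eq] at *
    rw [hD_add, ha, hb, add_zero]
  neg_mem' := by
    intro a ha
    simp only [Set.mem_setOf_eq] at *
    have h0 : D 0 = 0 := by
      have h := hD_add 0 0
      rw [add_zero] at h
      nth_rewrite 1 [← add_zero (D 0)] at h
      exact (add_left_cancel h).symm
    have h := hD_add a (-a)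
    rw [add_neg_cancel, h0, ha, zero_add] at h
    exact h.symm
  mul_mem' := by
    intro a b ha hb
    simp only [Set.mem_setOf_eq] at *
    rw [hD_mul, ha, hb, zero_mul, mul_zero, add_zero]
  inv_mem' := by
    intro a ha
    simp only [Set.mem_setOf_eq] at *
    rcases eq_or_ne a 0 with rfl | h
    · rwa [inv_zero]
    · have h1 : D 1 = 0 := by
        have h := hD_mul 1 1
        rw [mul_one, one_mul, mul_one] at h
        nth_rewrite 1 [← add_zero (D 1)] at h
        exact (add_left_cancel h).symm
      have hm := hD_mul a a⁻¹
      rw [mul_inv_cancel₀ h, h1, ha, zero_mul, zero_add] at hm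
      rcases mul_eq_zero.mp hm.symm with h' | h'
      · exact absurd h' h
      · exact h'

/-!
Let `C` be the constants of `F` and `𝒞` those of `K`. The `t i` form a transcendence basis of `F`
over `C` and the indeterminates one of `K` over `F`, so together they form a transcendence basis
of `K` over `C`. Such a basis stays algebraically independent over the intermediate field `𝒞`
exactly when `𝒞` is algebraic over `C`, and `C`, being algebraically closed, has no algebraic
extension but itself.
-/

section Tower

variable {ι R S A : Type*} [CommRing R] [CommRing S] [CommRing A]
  [Algebra R S] [Algebra S A] [Algebra R A] [IsScalarTower R S A] {x : ι → A}

theorem isAlgebraic_of_isTranscendenceBasis_of_algebraicIndependent [Nontrivial R]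
    (hR : IsTranscendenceBasis R x) (hS : AlgebraicIndependent S x) : Algebra.IsAlgebraic R S := by
  refine ⟨fun u ↦ of_not_not fun hu : Transcendental R u ↦ ?_⟩
  have hux : AlgebraicIndependent R (Sum.elim x (algebraMap S A ∘ fun _ : Unit ↦ u)) :=
    (algebraicIndependent_unique_type_iff.mpr hu).sumElim_comp hS
  have hu' := hux.transcendental_adjoin (s := Set.range Sum.inl) (i := .inr ()) (by simp)
  rw [← Set.range_comp, Sum.elim_comp_inl] at hu'
  exact hu' (hR.isAlgebraic.isAlgebraic _)

theorem algebraicIndependent_iff_isAlgebraic_of_isTranscendenceBasis [Nontrivial R]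
    [NoZeroDivisors S] (hR : IsTranscendenceBasis R x) :
    AlgebraicIndependent S x ↔ Algebra.IsAlgebraic R S :=
  ⟨isAlgebraic_of_isTranscendenceBasis_of_algebraicIndependent hR,
    fun _ ↦ hR.1.extendScalars S⟩

end Tower

theorem algebraicIndependent_iff_eq_bot_of_isAlgClosed {ι k K : Type*} [Field k] [Field K]
    [Algebra k K] [IsAlgClosed k] {x : ι → K} (hx : IsTranscendenceBasis k x)
    (L : IntermediateField k K) : AlgebraicIndependent L x ↔ L = ⊥ := by
  rw [algebraicIndependent_iff_isAlgebraic_of_isTranscendenceBasis hx]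
  refine ⟨fun _ ↦ L.eq_bot_of_isAlgClosed_of_isAlgebraic, ?_⟩
  rintro rfl
  infer_instance

theorem isTranscendenceBasis_iff_isAlgebraic_subfieldClosure {ι F : Type*} [Field F]
    {k : Subfield F} {t : ι → F} (ht : AlgebraicIndependent k t) :
    IsTranscendenceBasis k t ↔
      Algebra.IsAlgebraic (Subfield.closure ((k : Set F) ∪ Set.range t)) F := by
  have hclosure : (IntermediateField.adjoin k (Set.range t)).toSubfield =
      Subfield.closure ((k : Set F) ∪ Set.range t) := by
    rw [IntermediateField.adjoin_toSubfield]
    congr 2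
    exact Subtype.range_coe
  rw [ht.isTranscendenceBasis_iff_isAlgebraic, ← IntermediateField.isAlgebraic_adjoin_iff_top,
    ← hclosure]
  rfl

theorem isTranscendenceBasis_algebraMap_X_of_isFractionRing {σ R K : Type*} [CommRing R]
    [IsDomain R] [CommRing K] [Algebra R K] [Algebra (MvPolynomial σ R) K]
    [IsScalarTower R (MvPolynomial σ R) K] [IsFractionRing (MvPolynomial σ R) K] :
    IsTranscendenceBasis R fun v : σ ↦ algebraMap (MvPolynomial σ R) K (X v) :=
  have := IsLocalization.isAlgebraic K (nonZeroDivisors (MvPolynomial σ R))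
  (IsTranscendenceBasis.mvPolynomial σ R).algebraMap_comp

theorem isTranscendenceBasis_sumElim_algebraMap {ι κ R S A : Type*} [CommRing R] [CommRing S]
    [CommRing A] [NoZeroDivisors A] [Algebra R S] [Algebra S A] [Algebra R A]
    [IsScalarTower R S A] {t : ι → S} {x : κ → A} (ht : IsTranscendenceBasis R t)
    (hx : IsTranscendenceBasis S x) :
    IsTranscendenceBasis R (Sum.elim (fun i ↦ algebraMap S A (t i)) x) := by
  refine (isTranscendenceBasis_equiv' (Equiv.sumComm κ ι) ?_).mp (ht.sumElim_comp hx)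
  ext (_ | _) <;> rfl

theorem stmt_16_general {F K ι κ : Type*} [Field F] [Field K] [Algebra F K]
    (d : F → F)
    (hd_add : ∀ a b : F, d (a + b) = d a + d b)
    (hd_mul : ∀ a b : F, d (a * b) = d a * b + a * d b)
    (hC_closed : IsAlgClosed (constSubfield d hd_add hd_mul))
    {t : ι → F} (ht : IsTranscendenceBasis (constSubfield d hd_add hd_mul) t)
    (D : K → K)
    (hD_add : ∀ a b : K, D (a + b) = D a + D b)
    (hD_mul : ∀ a b : K, D (a * b) = D a * b + a * D b)
    (hD_F : ∀ g : F, D (algebraMap F K g) = algebraMap F K (d g))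
    {x : κ → K} (hx : IsTranscendenceBasis F x) :
    (∀ u : K, D u = 0 → ∃ c : F, d c = 0 ∧ u = algebraMap F K c) ↔
      AlgebraicIndependent (constSubfield D hD_add hD_mul)
        (Sum.elim (fun i ↦ algebraMap F K (t i)) x) := by
  have D_algebraMap (c : constSubfield d hd_add hd_mul) : D (algebraMap F K c) = 0 := by
    rw [hD_F, show d c = 0 from c.2, map_zero]
  let 𝒞 : IntermediateField (constSubfield d hd_add hd_mul) K :=
    (constSubfield D hD_add hD_mul).toIntermediateField D_algebraMap
  have constants_reduce_iff :
      (∀ u : K, D u = 0 → ∃ c : F, d c = 0 ∧ u = algebraMap F K c) ↔ 𝒞 = ⊥ := by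
    rw [eq_bot_iff]
    refine forall₂_congr fun u _ ↦ Iff.trans ?_ IntermediateField.mem_bot.symm
    exact ⟨fun ⟨c, hc, hu⟩ ↦ ⟨⟨c, hc⟩, hu.symm⟩, fun ⟨c, hu⟩ ↦ ⟨c, c.2, hu.symm⟩⟩
  have hbasis := isTranscendenceBasis_sumElim_algebraMap ht hx
  exact constants_reduce_iff.trans (algebraicIndependent_iff_eq_bot_of_isAlgClosed hbasis 𝒞).symm

/-- Let `F` be a differential field of characteristic zero whose field
of constants `C` is algebraically closed, with `F` of finite transcendence degree over
`C` via `t 1, …, t m`.  Extend the derivation to `K = F(X_ij)` by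
`D X_ij = ∑_ℓ f_iℓ • X_ℓj`.  Then the constants of `K` reduce to `C` iff the images of
`t 1, …, t m` together with the `X_ij` are algebraically independent over the subfield
of constants `𝒞` of `K`. -/
theorem stmt_16
    {F : Type*} [Field F] [CharZero F] (d : F → F)
    (hd_add : ∀ a b : F, d (a + b) = d a + d b)
    (hd_mul : ∀ a b : F, d (a * b) = d a * b + a * d b)
    (hC_closed : IsAlgClosed (constSubfield d hd_add hd_mul))
    (m : ℕ) (t : Fin m → F)
    (ht_ind : AlgebraicIndependent (constSubfield d hd_add hd_mul) t)
    (ht_alg : Algebra.IsAlgebraic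
      (Subfield.closure ((constSubfield d hd_add hd_mul : Set F) ∪ Set.range t)) F)
    (n : ℕ) (hn : 1 ≤ n) (f : Fin n → Fin n → F)
    (D : Kgen F n → Kgen F n)
    (hD_add : ∀ a b, D (a + b) = D a + D b)
    (hD_mul : ∀ a b, D (a * b) = D a * b + a * D b)
    (hD_F : ∀ g : F,
      D (algebraMap (MvPolynomial (Fin n × Fin n) F) (Kgen F n) (C g)) =
        algebraMap (MvPolynomial (Fin n × Fin n) F) (Kgen F n) (C (d g)))
    (hD_X : ∀ i j : Fin n,
      D (algebraMap (MvPolynomial (Fin n × Fin n) F) (Kgen F n) (X (i, j))) =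
        ∑ l : Fin n,
          algebraMap (MvPolynomial (Fin n × Fin n) F) (Kgen F n) (C (f i l)) *
            algebraMap (MvPolynomial (Fin n × Fin n) F) (Kgen F n) (X (l, j))) :
    (∀ u : Kgen F n, D u = 0 →
        ∃ c : F, d c = 0 ∧
          u = algebraMap (MvPolynomial (Fin n × Fin n) F) (Kgen F n) (C c)) ↔
      AlgebraicIndependent (constSubfield D hD_add hD_mul)
        (Sum.elim
          (fun i : Fin m =>
            algebraMap (MvPolynomial (Fin n × Fin n) F) (Kgen F n) (C (t i)))
          (fun v : Fin n × Fin n =>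
            algebraMap (MvPolynomial (Fin n × Fin n) F) (Kgen F n) (X v))) :=
  stmt_16_general d hd_add hd_mul hC_closed
    ((isTranscendenceBasis_iff_isAlgebraic_subfieldClosure ht_ind).mpr ht_alg) D hD_add hD_mul hD_F
    isTranscendenceBasis_algebraMap_X_of_isFractionRing
end

section
/- For k ≥ 1 let 𝕋_k denote the finite set of all elements of K of the form t_1^{a_1}⋯t_m^{a_m}·∏_{i,j} X_{ij}^{b_{ij}} with Σ_i a_i + Σ_{i,j} b_{ij} ≤ k, let N_k be its cardinality, and define the Wronskian W_k of 𝕋_k to be the determinant of the N_k × N_k matrix whose rows are indexed by the elements w of 𝕋_k (in some fixed enumeration) and whose entry in row w and column j (1 ≤ j ≤ N_k) is the iterated derivative D^(j−1)(w); the enumeration affects W_k only by a sign. Then the field of constants of K reduces to C (every u ∈ K with D(u) = 0 lies in the image of C under the composite embedding C ⊆ F → K) if and only if W_k ≠ 0 for every k ≥ 1. -/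
open MvPolynomial

/-- The set `𝕋 k` of all monomials `t₁^{a₁} ⋯ t_m^{a_m} · ∏ X_ij^{b_ij}` in `K` of total
degree at most `k`. -/
def monomialSet {F : Type*} [Field F] {m : ℕ} (t : Fin m → F) (n k : ℕ) :
    Set (Kgen F n) :=
  {u | ∃ (a : Fin m → ℕ) (b : Fin n → Fin n → ℕ),
    ((∑ i, a i) + ∑ i, ∑ j, b i j) ≤ k ∧
    u = (∏ i, algebraMap (MvPolynomial (Fin n × Fin n) F) (Kgen F n) (C (t i)) ^ a i) *
        ∏ i, ∏ j,
          algebraMap (MvPolynomial (Fin n × Fin n) F) (Kgen F n) (X (i, j)) ^ b i j}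

/-!
Let `C` be the field of constants of `F` and `y` the family of the `X_ij` and `t_i`, a transcendence
basis of `K` over `C`. The field of constants `𝒞` of `K` is algebraic over `C` if and only if `y`
stays algebraically independent over `𝒞`, that is, the monomials in `y` are linearly independent
over `𝒞`. Linear independence over the constants of a derivation is detected by the Wronskian, so
this says that all the `W_k` are nonzero. Finally, `F` is algebraically closed in `K = F(X_ij)`, so
a constant of `K` that is algebraic over `C` lies in `F`, hence in `C`.
-/

section Wronskian

variable {k K : Type*} [Field k] [Field K] [Algebra k K]

/-- The Wronskian of a finite family `v` with respect to an operator `δ`. Rows are indexed by the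
family and columns by the order of the iterate of `δ`, starting from order `0`. -/
def wronskian {R : Type*} [CommRing R] (δ : R → R) {N : ℕ} (v : Fin N → R) : R :=
  (Matrix.of fun r c : Fin N => δ^[(c : ℕ)] (v r)).det

theorem wronskian_ne_zero_iff_linearIndependent_rows (δ : K → K) {N : ℕ} (v : Fin N → K) :
    wronskian δ v ≠ 0 ↔ LinearIndependent K fun r (c : Fin N) => δ^[(c : ℕ)] (v r) := by
  rw [wronskian, ← isUnit_iff_ne_zero, ← Matrix.isUnit_iff_isUnit_det,
    ← Matrix.linearIndependent_rows_iff_isUnit]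
  rfl

theorem linearIndependent_of_linearIndependent_iterate (δ : Derivation k K K) {ι : Type*} {N : ℕ}
    {v : ι → K} (h : LinearIndependent K fun i (c : Fin N) => δ^[(c : ℕ)] (v i)) :
    LinearIndependent k v := by
  let jet : K →ₗ[k] Fin N → K := LinearMap.pi fun c => (δ : K →ₗ[k] K) ^ (c : ℕ)
  have hjet : jet ∘ v = fun i (c : Fin N) => δ^[(c : ℕ)] (v i) := by
    funext i c
    simp [jet, Module.End.pow_apply]
  refine LinearIndependent.of_comp jet ?_
  rw [hjet]
  exact h.restrict_scalars (by simpa [Algebra.smul_def] using (algebraMap k K).injective)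

theorem sum_derivation_mul_iterate_eq_zero {R A : Type*} [CommRing R] [CommRing A] [Algebra R A]
    (δ : Derivation R A A) {ι : Type*} {s : Finset ι} {v z : ι → A} {N : ℕ}
    (hz : ∀ j < N + 1, ∑ i ∈ s, z i * δ^[j] (v i) = 0) :
    ∀ j < N, ∑ i ∈ s, δ (z i) * δ^[j] (v i) = 0 := by
  intro j hj
  have hδ := congrArg δ (hz j (by omega))
  simp only [map_sum, Derivation.leibniz, smul_eq_mul, Finset.sum_add_distrib, map_zero,
    ← Function.iterate_succ_apply', hz (j + 1) (by omega), zero_add] at hδ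
  simpa only [mul_comm] using hδ

theorem eq_zero_of_sum_mul_iterate_eq_zero {δ : Derivation k K K}
    (hδ : ∀ u, δ u = 0 → u ∈ Set.range (algebraMap k K)) {ι : Type*} {v : ι → K}
    (hv : LinearIndependent k v) (s : Finset ι) (x : ι → K)
    (hx : ∀ j < s.card, ∑ i ∈ s, x i * δ^[j] (v i) = 0) : ∀ i ∈ s, x i = 0 := by
  classical
  induction s using Finset.induction_on generalizing x with
  | empty => simp
  | insert a s ha ih =>
    rw [Finset.card_insert_of_notMem ha] at hx
    have hxa : x a = 0 := by
      by_contra hxa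
      let z : ι → K := fun i => (x a)⁻¹ * x i
      have hza : z a = 1 := inv_mul_cancel₀ hxa
      have hz : ∀ j < s.card + 1, ∑ i ∈ insert a s, z i * δ^[j] (v i) = 0 := fun j hj => by
        simp only [z, mul_assoc, ← Finset.mul_sum, hx j hj, mul_zero]
      have hδz : ∀ i ∈ s, δ (z i) = 0 := ih (fun i => δ (z i)) fun j hj => by
        simpa [Finset.sum_insert ha, hza] using sum_derivation_mul_iterate_eq_zero δ hz j hj
      have hδz' : ∀ i ∈ insert a s, δ (z i) = 0 :=
        Finset.forall_mem_insert .. |>.mpr ⟨by simp [hza], hδz⟩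
      choose! c hc using fun i hi => hδ (z i) (hδz' i hi)
      have hca : c a = 0 := by
        refine linearIndependent_iff'.mp hv (insert a s) c ?_ a (Finset.mem_insert_self a s)
        rw [← hz 0 (by omega)]
        exact Finset.sum_congr rfl fun i hi => by simp [Algebra.smul_def, hc i hi]
      simpa [hca, hza] using hc a (Finset.mem_insert_self a s)
    refine Finset.forall_mem_insert .. |>.mpr ⟨hxa, ih x fun j hj => ?_⟩
    simpa [Finset.sum_insert ha, hxa] using hx j (by omega)

theorem wronskian_ne_zero_iff_linearIndependent {δ : Derivation k K K}
    (hδ : ∀ u, δ u = 0 → u ∈ Set.range (algebraMap k K)) {N : ℕ} (v : Fin N → K) :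
    wronskian δ v ≠ 0 ↔ LinearIndependent k v := by
  rw [wronskian_ne_zero_iff_linearIndependent_rows]
  refine ⟨linearIndependent_of_linearIndependent_iterate δ, fun hv => ?_⟩
  refine Fintype.linearIndependent_iff.mpr fun x hx i => ?_
  refine eq_zero_of_sum_mul_iterate_eq_zero hδ hv Finset.univ x (fun j hj => ?_) i
    (Finset.mem_univ i)
  simpa using congrFun hx ⟨j, by simpa using hj⟩

theorem forall_wronskian_ne_zero_iff_linearIndepOn {δ : Derivation k K K}
    (hδ : ∀ u, δ u = 0 → u ∈ Set.range (algebraMap k K)) {S : Set K} (hS : S.Finite) :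
    (∀ (N : ℕ) (w : Fin N → K), Function.Injective w → Set.range w = S → wronskian δ w ≠ 0) ↔
      LinearIndepOn k id S := by
  constructor
  · intro h
    obtain ⟨N, w, hw, rfl⟩ := hS.fin_param
    exact (linearIndepOn_id_range_iff hw).mpr
      ((wronskian_ne_zero_iff_linearIndependent hδ w).mp (h N w hw rfl))
  · rintro h N w hw rfl
    exact (wronskian_ne_zero_iff_linearIndependent hδ w).mpr
      ((linearIndepOn_id_range_iff hw).mp h)

end Wronskian

section Monomials

variable {R A σ : Type*} [CommRing R] [CommRing A] [Algebra R A]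

/-- The monomials of total degree at most `d` in a family `y`, as a set of elements of the
ambient ring: distinct exponents may give the same element. -/
def monomialsOfDegreeLE (y : σ → A) (d : ℕ) : Set A :=
  (fun e : σ →₀ ℕ => e.prod (y · ^ ·)) '' {e | e.degree ≤ d}

theorem finite_monomialsOfDegreeLE [Finite σ] (y : σ → A) (d : ℕ) :
    (monomialsOfDegreeLE y d).Finite :=
  (Finsupp.finite_of_degree_le d).image _

theorem algebraicIndependent_iff_linearIndependent_prod_pow {y : σ → A} :
    AlgebraicIndependent R y ↔ LinearIndependent R fun e : σ →₀ ℕ => e.prod (y · ^ ·) := by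
  have hcomb : Finsupp.linearCombination R (fun e : σ →₀ ℕ => e.prod (y · ^ ·)) =
      (aeval y).toLinearMap ∘ₗ (basisMonomials σ R).repr.symm.toLinearMap := by
    ext e
    simp [aeval_monomial]
  rw [LinearIndependent, hcomb, LinearMap.coe_comp, LinearEquiv.coe_coe, EquivLike.injective_comp]
  rfl

theorem algebraicIndependent_iff_linearIndepOn_monomialsOfDegreeLE {y : σ → A}
    (hy : Function.Injective fun e : σ →₀ ℕ => e.prod (y · ^ ·)) :
    AlgebraicIndependent R y ↔ ∀ d, 1 ≤ d → LinearIndepOn R id (monomialsOfDegreeLE y d) := by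
  simp only [algebraicIndependent_iff_linearIndependent_prod_pow, monomialsOfDegreeLE,
    ← linearIndepOn_iff_image hy.injOn]
  refine ⟨fun h d _ => h.linearIndepOn _, fun h => ?_⟩
  have hmono : Monotone fun d : ℕ => {e : σ →₀ ℕ | e.degree ≤ d + 1} :=
    fun d d' hdd' e (he : e.degree ≤ d + 1) => he.trans (by omega)
  have hcover : ⋃ d : ℕ, {e : σ →₀ ℕ | e.degree ≤ d + 1} = Set.univ :=
    Set.eq_univ_of_forall fun e => Set.mem_iUnion.mpr ⟨e.degree, Nat.le_succ _⟩
  rw [← linearIndepOn_univ_iff, ← hcover]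
  exact linearIndepOn_iUnion_of_directed hmono.directed_le fun d => h (d + 1) (by omega)

end Monomials

section TranscendenceBasis

theorem algebraicIndependent_iff_isAlgebraic_of_isTranscendenceBasis_s17 {R S A σ : Type*}
    [CommRing R] [Nontrivial R] [CommRing S] [NoZeroDivisors S] [CommRing A] [Algebra R S]
    [Algebra S A] [Algebra R A] [IsScalarTower R S A] {y : σ → A} (hy : IsTranscendenceBasis R y) :
    AlgebraicIndependent S y ↔ Algebra.IsAlgebraic R S := by
  refine ⟨fun hyS => ⟨fun u => ?_⟩, fun _ => hy.1.extendScalars S⟩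
  by_contra hu
  have hu' : AlgebraicIndependent R fun _ : Unit => u :=
    algebraicIndependent_unique_type_iff.mpr hu
  have hswap : AlgebraicIndependent R (Sum.elim (algebraMap S A ∘ fun _ : Unit => u) y) := by
    convert (hu'.sumElim_comp hyS).comp Sum.swap Sum.swap_leftInverse.injective using 1
    ext (_ | _) <;> rfl
  exact (AlgebraicIndependent.sumElim_iff.mp hswap).2.transcendental ()
    (hy.isAlgebraic.isAlgebraic _)

theorem isTranscendenceBasis_of_isAlgebraic_closure {F ι : Type*} [Field F] (k : Subfield F)
    {t : ι → F} (ht : AlgebraicIndependent k t)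
    (halg : Algebra.IsAlgebraic (Subfield.closure ((k : Set F) ∪ Set.range t)) F) :
    IsTranscendenceBasis k t := by
  have hadjoin : (IntermediateField.adjoin k (Set.range t)).toSubfield =
      Subfield.closure ((k : Set F) ∪ Set.range t) := by
    rw [IntermediateField.adjoin_toSubfield]
    congr 2
    exact Subtype.range_coe
  rw [← hadjoin] at halg
  exact ht.isTranscendenceBasis_iff_isAlgebraic.mpr
    (IntermediateField.isAlgebraic_adjoin_iff_top.mp halg)

end TranscendenceBasis

section FractionField

theorem mem_range_algebraMap_of_isAlgebraic_of_isFractionRing (σ : Type*) {F K : Type*} [Field F]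
    [Field K] [Algebra F K] [Algebra (MvPolynomial σ F) K] [IsScalarTower F (MvPolynomial σ F) K]
    [IsFractionRing (MvPolynomial σ F) K] {u : K} (hu : IsAlgebraic F u) :
    u ∈ Set.range (algebraMap F K) := by
  obtain rfl | hu0 := eq_or_ne u 0
  · exact ⟨0, map_zero _⟩
  -- Both `u` and `u⁻¹` are integral over the integrally closed ring `F[X]`, so `u` is a unit there.
  obtain ⟨p, hp⟩ := IsIntegrallyClosed.isIntegral_iff.mp
    (hu.isIntegral.tower_top (A := MvPolynomial σ F))
  obtain ⟨q, hq⟩ := IsIntegrallyClosed.isIntegral_iff.mp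
    (hu.inv.isIntegral.tower_top (A := MvPolynomial σ F))
  have hpq : p * q = 1 := IsFractionRing.injective (MvPolynomial σ F) K <| by
    rw [map_mul, hp, hq, mul_inv_cancel₀ hu0, map_one]
  obtain ⟨c, -, rfl⟩ := isUnit_iff_eq_C_of_isReduced.mp (IsUnit.of_mul_eq_one q hpq)
  exact ⟨c, by rw [← hp, ← algebraMap_eq, ← IsScalarTower.algebraMap_apply]⟩

theorem isTranscendenceBasis_sumElim_X {σ ι k F K : Type*} [CommRing k] [CommRing F]
    [IsDomain F] [Field K] [Algebra k F] [Algebra k K] [Algebra F K] [IsScalarTower k F K]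
    [Algebra (MvPolynomial σ F) K] [IsScalarTower F (MvPolynomial σ F) K]
    [IsFractionRing (MvPolynomial σ F) K] {t : ι → F} (ht : IsTranscendenceBasis k t) :
    IsTranscendenceBasis k (Sum.elim (algebraMap (MvPolynomial σ F) K ∘ X)
      (algebraMap F K ∘ t)) := by
  have : Algebra.IsAlgebraic (MvPolynomial σ F) K :=
    IsLocalization.isAlgebraic _ (nonZeroDivisors (MvPolynomial σ F))
  exact ht.sumElim_comp ((IsTranscendenceBasis.mvPolynomial σ F).algebraMap_comp (A := K))

end FractionField

section Constants

/-- An additive map satisfying the Leibniz rule and killing `R`, bundled as an `R`-derivation. -/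
def derivationOfLeibniz {R A : Type*} [CommRing R] [CommRing A] [Algebra R A] (D : A → A)
    (hadd : ∀ a b, D (a + b) = D a + D b) (hmul : ∀ a b, D (a * b) = D a * b + a * D b)
    (hR : ∀ c : R, D (algebraMap R A c) = 0) : Derivation R A A :=
  Derivation.mk'
    { toFun := D
      map_add' := hadd
      map_smul' := fun c x => by simp [Algebra.smul_def, hmul, hR] }
    fun a b => by simp [hmul, mul_comm, add_comm]

variable {k K : Type*} [Field k] [Field K] [Algebra k K]

/-- The constants of a `k`-derivation of a field, as an intermediate field: the base over which
a transcendence basis over `k` has to stay independent. -/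
def constIntermediateField (δ : Derivation k K K) : IntermediateField k K :=
  (constSubfield δ (map_add δ) fun a b => by simp [mul_comm, add_comm]).toIntermediateField
    δ.map_algebraMap

theorem forall_constant_isAlgebraic_iff_forall_wronskian_ne_zero {σ : Type*} [Finite σ]
    (δ : Derivation k K K) {y : σ → K} (hy : IsTranscendenceBasis k y) :
    (∀ u, δ u = 0 → IsAlgebraic k u) ↔
      ∀ d, 1 ≤ d → ∀ (N : ℕ) (w : Fin N → K), Function.Injective w →
        Set.range w = monomialsOfDegreeLE y d → wronskian δ w ≠ 0 := by
  let C := constIntermediateField δ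
  let δC : Derivation C K K :=
    derivationOfLeibniz δ (map_add δ) (fun a b => by simp [mul_comm, add_comm]) fun c => c.2
  have hδC : ∀ u, δC u = 0 → u ∈ Set.range (algebraMap C K) := fun u hu => ⟨⟨u, hu⟩, rfl⟩
  have hinj := (algebraicIndependent_iff_linearIndependent_prod_pow.mp hy.1).injective
  calc (∀ u, δ u = 0 → IsAlgebraic k u)
    _ ↔ Algebra.IsAlgebraic k C := C.toSubalgebra.isAlgebraic_iff
    _ ↔ AlgebraicIndependent C y :=
      (algebraicIndependent_iff_isAlgebraic_of_isTranscendenceBasis_s17 hy).symm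
    _ ↔ ∀ d, 1 ≤ d → LinearIndepOn C id (monomialsOfDegreeLE y d) :=
      algebraicIndependent_iff_linearIndepOn_monomialsOfDegreeLE hinj
    _ ↔ _ := forall₂_congr fun d _ =>
      (forall_wronskian_ne_zero_iff_linearIndepOn hδC (finite_monomialsOfDegreeLE y d)).symm

theorem forall_constant_isAlgebraic_iff_exists_constant {F : Type*} [Field F] [Algebra F K]
    {d : F → F} (hd_add : ∀ a b, d (a + b) = d a + d b)
    (hd_mul : ∀ a b, d (a * b) = d a * b + a * d b)
    {D : K → K} (hD : ∀ g, D (algebraMap F K g) = algebraMap F K (d g))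
    (hF : ∀ u : K, IsAlgebraic F u → u ∈ Set.range (algebraMap F K)) :
    (∀ u : K, D u = 0 → IsAlgebraic (constSubfield d hd_add hd_mul) u) ↔
      ∀ u, D u = 0 → ∃ c, d c = 0 ∧ u = algebraMap F K c := by
  refine forall₂_congr fun u hu => ⟨fun halg => ?_, ?_⟩
  · obtain ⟨c, rfl⟩ := hF u (halg.tower_top F)
    exact ⟨c, (algebraMap F K).injective (by rw [← hD, hu, map_zero]), rfl⟩
  · rintro ⟨c, hc, rfl⟩
    exact isAlgebraic_algebraMap (⟨c, hc⟩ : constSubfield d hd_add hd_mul)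

end Constants

section Generators

variable {F : Type*} [Field F] {m : ℕ}

theorem algebraMap_Kgen_apply (n : ℕ) (g : F) :
    algebraMap F (Kgen F n) g = algebraMap (MvPolynomial (Fin n × Fin n) F) (Kgen F n) (C g) :=
  IsScalarTower.algebraMap_apply F (MvPolynomial (Fin n × Fin n) F) (Kgen F n) g

/-- The indeterminates `X_ij` and the `t_i`, as a single family in `K`: a transcendence basis of
`K` over the constants of `F` when `t` is one of `F`. -/
noncomputable def generators (t : Fin m → F) (n : ℕ) : (Fin n × Fin n) ⊕ Fin m → Kgen F n :=
  Sum.elim (algebraMap (MvPolynomial (Fin n × Fin n) F) (Kgen F n) ∘ X)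
    (algebraMap F (Kgen F n) ∘ t)

theorem prod_generators_pow (t : Fin m → F) (n : ℕ) (e : (Fin n × Fin n) ⊕ Fin m →₀ ℕ) :
    e.prod (generators t n · ^ ·) =
      (∏ i, algebraMap (MvPolynomial (Fin n × Fin n) F) (Kgen F n) (C (t i)) ^ e (.inr i)) *
        ∏ i, ∏ j, algebraMap (MvPolynomial (Fin n × Fin n) F) (Kgen F n) (X (i, j)) ^
          e (.inl (i, j)) := by
  rw [Finsupp.prod_fintype _ _ fun _ => pow_zero _, Fintype.prod_sum_type,
    Fintype.prod_prod_type, mul_comm]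
  simp only [generators, Sum.elim_inl, Sum.elim_inr, Function.comp_apply, algebraMap_Kgen_apply]

theorem monomialSet_eq_monomialsOfDegreeLE (t : Fin m → F) (n k : ℕ) :
    monomialSet t n k = monomialsOfDegreeLE (generators t n) k := by
  have hdeg (e : (Fin n × Fin n) ⊕ Fin m →₀ ℕ) :
      e.degree = (∑ i, e (.inr i)) + ∑ i, ∑ j, e (.inl (i, j)) := by
    rw [Finsupp.degree_eq_sum, Fintype.sum_sum_type, Fintype.sum_prod_type, add_comm]
  ext u
  constructor
  · rintro ⟨a, b, hab, rfl⟩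
    refine ⟨Finsupp.equivFunOnFinite.symm (Sum.elim (fun p => b p.1 p.2) a), ?_, ?_⟩
    · simpa [hdeg] using hab
    · exact (prod_generators_pow t n _).trans (by simp)
  · rintro ⟨e, he, rfl⟩
    exact ⟨fun i => e (.inr i), fun i j => e (.inl (i, j)), hdeg e ▸ he, prod_generators_pow t n e⟩

end Generators

theorem stmt_17_general
    {F : Type*} [Field F] (d : F → F)
    (hd_add : ∀ a b : F, d (a + b) = d a + d b)
    (hd_mul : ∀ a b : F, d (a * b) = d a * b + a * d b)
    (m : ℕ) (t : Fin m → F)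
    (ht_ind : AlgebraicIndependent (constSubfield d hd_add hd_mul) t)
    (ht_alg : Algebra.IsAlgebraic
      (Subfield.closure ((constSubfield d hd_add hd_mul : Set F) ∪ Set.range t)) F)
    (n : ℕ) (D : Kgen F n → Kgen F n)
    (hD_add : ∀ a b, D (a + b) = D a + D b)
    (hD_mul : ∀ a b, D (a * b) = D a * b + a * D b)
    (hD_F : ∀ g : F,
      D (algebraMap (MvPolynomial (Fin n × Fin n) F) (Kgen F n) (C g)) =
        algebraMap (MvPolynomial (Fin n × Fin n) F) (Kgen F n) (C (d g))) :
    (∀ u : Kgen F n, D u = 0 →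
        ∃ c : F, d c = 0 ∧
          u = algebraMap (MvPolynomial (Fin n × Fin n) F) (Kgen F n) (C c)) ↔
      ∀ k : ℕ, 1 ≤ k → ∀ (N : ℕ) (w : Fin N → Kgen F n),
        Function.Injective w → Set.range w = monomialSet t n k →
        (Matrix.of fun r c : Fin N => D^[(c : ℕ)] (w r)).det ≠ 0 := by
  simp only [← algebraMap_Kgen_apply] at hD_F ⊢
  have hD_const (c : constSubfield d hd_add hd_mul) :
      D (algebraMap (constSubfield d hd_add hd_mul) (Kgen F n) c) = 0 := by
    rw [IsScalarTower.algebraMap_apply _ F, hD_F, show d (algebraMap _ F c) = 0 from c.2, map_zero]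
  let δ := derivationOfLeibniz D hD_add hD_mul hD_const
  have hbasis : IsTranscendenceBasis (constSubfield d hd_add hd_mul) (generators t n) :=
    isTranscendenceBasis_sumElim_X (isTranscendenceBasis_of_isAlgebraic_closure _ ht_ind ht_alg)
  have hclosed (u : Kgen F n) : IsAlgebraic F u → u ∈ Set.range (algebraMap F (Kgen F n)) :=
    mem_range_algebraMap_of_isAlgebraic_of_isFractionRing (Fin n × Fin n)
  rw [← forall_constant_isAlgebraic_iff_exists_constant hd_add hd_mul hD_F hclosed]
  simp only [monomialSet_eq_monomialsOfDegreeLE]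
  exact forall_constant_isAlgebraic_iff_forall_wronskian_ne_zero δ hbasis

/-- With the setup of the specialization theorem, the constants of
`K = F(X_ij)` reduce to `C` iff for every `k ≥ 1` the Wronskian `W k` of the set `𝕋 k`
of monomials of degree at most `k` in the `t i` and the `X_ij` — the determinant of the
matrix whose row indexed by `w ∈ 𝕋 k` has entries the iterated derivatives
`D^[j-1] w` — is nonzero (for any, equivalently every, enumeration of `𝕋 k`). -/
theorem stmt_17
    {F : Type*} [Field F] [CharZero F] (d : F → F)
    (hd_add : ∀ a b : F, d (a + b) = d a + d b)
    (hd_mul : ∀ a b : F, d (a * b) = d a * b + a * d b)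
    (hC_closed : IsAlgClosed (constSubfield d hd_add hd_mul))
    (m : ℕ) (t : Fin m → F)
    (ht_ind : AlgebraicIndependent (constSubfield d hd_add hd_mul) t)
    (ht_alg : Algebra.IsAlgebraic
      (Subfield.closure ((constSubfield d hd_add hd_mul : Set F) ∪ Set.range t)) F)
    (n : ℕ) (hn : 1 ≤ n) (f : Fin n → Fin n → F)
    (D : Kgen F n → Kgen F n)
    (hD_add : ∀ a b, D (a + b) = D a + D b)
    (hD_mul : ∀ a b, D (a * b) = D a * b + a * D b)
    (hD_F : ∀ g : F,
      D (algebraMap (MvPolynomial (Fin n × Fin n) F) (Kgen F n) (C g)) =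
        algebraMap (MvPolynomial (Fin n × Fin n) F) (Kgen F n) (C (d g)))
    (hD_X : ∀ i j : Fin n,
      D (algebraMap (MvPolynomial (Fin n × Fin n) F) (Kgen F n) (X (i, j))) =
        ∑ l : Fin n,
          algebraMap (MvPolynomial (Fin n × Fin n) F) (Kgen F n) (C (f i l)) *
            algebraMap (MvPolynomial (Fin n × Fin n) F) (Kgen F n) (X (l, j))) :
    (∀ u : Kgen F n, D u = 0 →
        ∃ c : F, d c = 0 ∧
          u = algebraMap (MvPolynomial (Fin n × Fin n) F) (Kgen F n) (C c)) ↔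
      ∀ k : ℕ, 1 ≤ k → ∀ (N : ℕ) (w : Fin N → Kgen F n),
        Function.Injective w → Set.range w = monomialSet t n k →
        (Matrix.of fun r c : Fin N => D^[(c : ℕ)] (w r)).det ≠ 0 :=
  stmt_17_general d hd_add hd_mul m t ht_ind ht_alg n D hD_add hD_mul hD_F
end

section
/- The element Y_{22} does not belong to the differential ideal {Y_{11}Y_{22}, Y_{12}} of A: Y_{22,0} ∉ Ideal.span({D^[k](Y_{11,0}·Y_{22,0}) | k ∈ ℕ} ∪ {Y_{12,k} | k ∈ ℕ}), where D^[k] denotes the k-th iterate of D (note D^[k](Y_{12,0}) = Y_{12,k}). -/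
open MvPolynomial

/-- The ring of differential polynomials `A = C{Y₁₁, Y₁₂, Y₂₁, Y₂₂}`: multivariate
polynomials over `C` in the variables `Y i j k` (with `Y i j := Y i j 0`). -/
abbrev A2 (C : Type*) [Field C] : Type _ :=
  MvPolynomial ((Fin 2 × Fin 2) × ℕ) C

/-!
Since the derivation shifts the second index of `X (i, k)`, the ideal generated by all the variables
`X (i, k)` with `i` in a fixed set `T` is stable under it. For `T = {a, c}` this ideal contains
`X (a, 0) * X (b, 0)` and every `X (c, k)`, hence the differential ideal generated by them, but
for `b ∉ T` it does not contain `X (b, 0)`.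
-/

theorem derivation_mapsTo_ideal_span {R A : Type*} [CommSemiring R] [CommSemiring A] [Algebra R A]
    (D : Derivation R A A) {s : Set A} (hs : Set.MapsTo D s (Ideal.span s)) :
    Set.MapsTo D (Ideal.span s) (Ideal.span s) := by
  intro x hx
  induction hx using Submodule.span_induction with
  | mem x hx => exact hs hx
  | zero => simp
  | add x y _ _ hDx hDy =>
    rw [map_add]
    exact add_mem hDx hDy
  | smul a x hx hDx =>
    rw [smul_eq_mul, D.leibniz]
    exact add_mem (Ideal.mul_mem_left _ a hDx) (Ideal.mul_mem_right _ _ hx)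

theorem X_mem_ideal_span_X_image_iff {σ A : Type*} [CommSemiring A] [Nontrivial A]
    {i : σ} {s : Set σ} :
    (X i : MvPolynomial σ A) ∈ Ideal.span (X '' s) ↔ i ∈ s := by
  classical
  simp [mem_ideal_span_X_image, support_X, Finsupp.single_apply]

/-- The ideal generated by the differential indeterminates in `T` and all their derivatives, where
`X (i, k)` stands for the `k`-th derivative of the `i`-th indeterminate. -/
noncomputable def jetIdeal {ι : Type*} (A : Type*) [CommSemiring A] (T : Set ι) :
    Ideal (MvPolynomial (ι × ℕ) A) :=
  Ideal.span (X '' (T ×ˢ Set.univ))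

section JetIdeal

variable {R A ι : Type*} [CommSemiring R] [CommSemiring A] [Algebra R A]

theorem X_mem_jetIdeal {T : Set ι} {i : ι} (hi : i ∈ T) (k : ℕ) : X (i, k) ∈ jetIdeal A T :=
  Ideal.subset_span (Set.mem_image_of_mem X ⟨hi, Set.mem_univ k⟩)

theorem X_mem_jetIdeal_iff [Nontrivial A] {T : Set ι} {i : ι} {k : ℕ} :
    X (i, k) ∈ jetIdeal A T ↔ i ∈ T := by
  simp [jetIdeal, X_mem_ideal_span_X_image_iff]

theorem derivation_mapsTo_jetIdeal
    (D : Derivation R (MvPolynomial (ι × ℕ) A) (MvPolynomial (ι × ℕ) A))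
    (hD : ∀ i k, D (X (i, k)) = X (i, k + 1)) (T : Set ι) :
    Set.MapsTo D (jetIdeal A T) (jetIdeal A T) := by
  apply derivation_mapsTo_ideal_span
  rintro _ ⟨⟨i, k⟩, ⟨hi, -⟩, rfl⟩
  rw [hD]
  exact X_mem_jetIdeal hi (k + 1)

end JetIdeal

theorem stmt_19_general {R A ι : Type*} [CommSemiring R] [CommSemiring A] [Nontrivial A]
    [Algebra R A] (D : Derivation R (MvPolynomial (ι × ℕ) A) (MvPolynomial (ι × ℕ) A))
    (hD : ∀ i k, D (X (i, k)) = X (i, k + 1)) {a b c : ι} (hba : b ≠ a) (hbc : b ≠ c) :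
    (X (b, 0) : MvPolynomial (ι × ℕ) A) ∉
      Ideal.span
        ((Set.range fun k : ℕ => D^[k] (X (a, 0) * X (b, 0))) ∪
          (Set.range fun k : ℕ => X (c, k))) := by
  have iterate_mem (k : ℕ) : D^[k] (X (a, 0) * X (b, 0)) ∈ jetIdeal A {a, c} :=
    (derivation_mapsTo_jetIdeal D hD {a, c}).iterate k
      (Ideal.mul_mem_right _ _ (X_mem_jetIdeal (by simp) 0))
  have span_le : Ideal.span ((Set.range fun k : ℕ => D^[k] (X (a, 0) * X (b, 0))) ∪
      (Set.range fun k : ℕ => X (c, k))) ≤ jetIdeal A {a, c} :=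
    Ideal.span_le.2 (Set.union_subset (Set.range_subset_iff.2 iterate_mem)
      (Set.range_subset_iff.2 (X_mem_jetIdeal (by simp))))
  intro h
  have b_mem : b ∈ ({a, c} : Set ι) := X_mem_jetIdeal_iff.1 (span_le h)
  exact b_mem.elim hba hbc

/-- `Y₂₂` does not belong to the differential ideal `{Y₁₁Y₂₂, Y₁₂}`
of `A = C{Y₁₁, Y₁₂, Y₂₁, Y₂₂}`, i.e. the ideal generated by all iterated derivatives of
`Y₁₁·Y₂₂` together with all the `Y₁₂ₖ = D^[k] Y₁₂`. -/
theorem stmt_19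
    {C : Type*} [Field C] [CharZero C]
    (D : A2 C → A2 C)
    (hD_add : ∀ a b, D (a + b) = D a + D b)
    (hD_mul : ∀ a b, D (a * b) = D a * b + a * D b)
    (hD_C : ∀ c : C, D (MvPolynomial.C c) = 0)
    (hD_Y : ∀ (i j : Fin 2) (k : ℕ), D (X ((i, j), k)) = X ((i, j), k + 1)) :
    (X (((1 : Fin 2), (1 : Fin 2)), (0 : ℕ)) : A2 C) ∉
      Ideal.span
        ((Set.range fun k : ℕ =>
            D^[k] (X (((0 : Fin 2), (0 : Fin 2)), (0 : ℕ)) *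
              X (((1 : Fin 2), (1 : Fin 2)), (0 : ℕ)))) ∪
          (Set.range fun k : ℕ => (X (((0 : Fin 2), (1 : Fin 2)), k) : A2 C))) := by
  let δ : Derivation ℤ (A2 C) (A2 C) := .mk' (AddMonoidHom.mk' D hD_add).toIntLinearMap
    fun a b => by simp [hD_mul, mul_comm, add_comm]
  exact stmt_19_general δ (fun i => hD_Y i.1 i.2) (by decide) (by decide)
end
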